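/- arXiv:1910.00173 — 2 statements merged into one kernel-verified Lean document; each statement's English description precedes it below -/
import Mathlib

section
/- Let 0 < α < 1/10 and T > 0. Define Γ(β) = (cos β)^α, c = (2/π) ∫_0^{π/2} Γ(β) sin(2β) dβ, Ω*(z) = 3z/(1+z)², η*(z) = 6z/(1+z)³, and for t < T, R > 0, β ∈ [0,π/2] set Ω(R,β,t) = (α/c) (T−t)^{−1} Γ(β) Ω*(R/(T−t)) and η(R,β,t) = (α/c) (T−t)^{−2} Γ(β) η*(R/(T−t)). Then c > 0 and (Ω,η) is an exact self-similar blowup solution of the leading-order system: for every t < T, R > 0 and β ∈ [0,π/2], ∂_t Ω(R,β,t) = η(R,β,t) and ∂_t η(R,β,t) = (2/(πα)) L₁₂(Ω(·,·,t))(R) · η(R,β,t). -/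
open Real MeasureTheory Set

noncomputable section

namespace Paper

/-- The domain `(0,∞) × (0,π/2)` in the `(R,β)` variables. -/
def Qdom : Set (ℝ × ℝ) := Set.Ioi (0:ℝ) ×ˢ Set.Ioo (0:ℝ) (Real.pi/2)

/-- Inner product `⟨f,g⟩ = ∫₀^∞ ∫₀^{π/2} f g dβ dR`. -/
def inner2 (f g : ℝ → ℝ → ℝ) : ℝ :=
  ∫ R in Set.Ioi (0:ℝ), ∫ β in Set.Ioo (0:ℝ) (Real.pi/2), f R β * g R β

/-- The `L²` norm `‖f‖₂`. -/
def norm2 (f : ℝ → ℝ → ℝ) : ℝ := Real.sqrt (inner2 f f)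

/-- `‖h‖_{L²(R)}` for functions of `R` alone. -/
def normR (h : ℝ → ℝ) : ℝ := Real.sqrt (∫ R in Set.Ioi (0:ℝ), (h R)^2)

/-- `D_R = R ∂_R`. -/
def DR (f : ℝ → ℝ → ℝ) : ℝ → ℝ → ℝ := fun R β => R * deriv (fun r => f r β) R

/-- `D_R` for functions of `R` alone. -/
def DR1 (h : ℝ → ℝ) : ℝ → ℝ := fun R => R * deriv h R

/-- `D_β = sin(2β) ∂_β`. -/
def Dbeta (f : ℝ → ℝ → ℝ) : ℝ → ℝ → ℝ :=
  fun R β => Real.sin (2*β) * deriv (fun b => f R b) β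

/-- `L₁₂(Ω)(R) = ∫_R^∞ ∫₀^{π/2} Ω(s,β) sin(2β) s⁻¹ dβ ds`. -/
def L12 (Ω : ℝ → ℝ → ℝ) (R : ℝ) : ℝ :=
  ∫ s in Set.Ioi R, ∫ β in Set.Ioo (0:ℝ) (Real.pi/2), Ω s β * Real.sin (2*β) / s

/-- `L̃₁₂(Ω)(R) = L₁₂(Ω)(R) − L₁₂(Ω)(0)`. -/
def tL12 (Ω : ℝ → ℝ → ℝ) (R : ℝ) : ℝ := L12 Ω R - L12 Ω 0

/-- Compact support contained in the open domain `(0,∞)×(0,π/2)`. -/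
def suppIn (f : ℝ → ℝ → ℝ) : Prop :=
  ∃ K : Set (ℝ × ℝ), IsCompact K ∧ K ⊆ Qdom ∧ ∀ x y : ℝ, (x, y) ∉ K → f x y = 0

/-- Integrability over the domain. -/
def Integrable2 (f : ℝ → ℝ → ℝ) : Prop :=
  MeasureTheory.IntegrableOn (Function.uncurry f) Qdom

/-- `Γ(β) = (cos β)^α`. -/
def Γf (α : ℝ) (β : ℝ) : ℝ := Real.cos β ^ α

/-- The normalizing constant `c = (2/π)∫₀^{π/2} Γ(β) sin(2β) dβ`. -/
def cst (α : ℝ) : ℝ :=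
  (2/Real.pi) * ∫ β in Set.Ioo (0:ℝ) (Real.pi/2), Γf α β * Real.sin (2*β)

/-- The approximate profile `Ω̄`. -/
def Ωbar (α : ℝ) : ℝ → ℝ → ℝ := fun R β => (α / cst α) * Γf α β * (3*R/(1+R)^2)

/-- The approximate profile `η̄`. -/
def ηbar (α : ℝ) : ℝ → ℝ → ℝ := fun R β => (α / cst α) * Γf α β * (6*R/(1+R)^3)

/-- The singular weight `φ₁ = (1+R)⁴R⁻⁴ sin(2β)^{-σ}`, `σ = 99/100`. -/
def phi1 : ℝ → ℝ → ℝ := fun R β => (1+R)^4 / R^4 * Real.sin (2*β) ^ (-(99/100 : ℝ))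

/-- The singular weight `φ₂ = (1+R)⁴R⁻⁴ sin(2β)^{-γ}`, `γ = 1 + α/10`. -/
def phi2 (α : ℝ) : ℝ → ℝ → ℝ := fun R β => (1+R)^4 / R^4 * Real.sin (2*β) ^ (-(1 + α/10))

/-- The singular weight `ψ₁ = (1+R)⁴R⁻⁴ (sin β cos β)^{-σ}`. -/
def psi1 : ℝ → ℝ → ℝ := fun R β =>
  (1+R)^4 / R^4 * (Real.sin β * Real.cos β) ^ (-(99/100 : ℝ))

/-- The singular weight `ψ₂ = (1+R)⁴R⁻⁴ (sin β)^{-σ}(cos β)^{-γ}`. -/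
def psi2 (α : ℝ) : ℝ → ℝ → ℝ := fun R β =>
  (1+R)^4 / R^4 * Real.sin β ^ (-(99/100 : ℝ)) * Real.cos β ^ (-(1 + α/10))

/-- `c_ω = −(2/(πα)) L₁₂(Ω)(0)`. -/
def cω (α : ℝ) (Ω : ℝ → ℝ → ℝ) : ℝ := -(2/(Real.pi*α)) * L12 Ω 0

/-- The linearized operator `L₁`. -/
def opL1 (α : ℝ) (Ω η : ℝ → ℝ → ℝ) : ℝ → ℝ → ℝ := fun R β =>
  - DR Ω R β - (3/(1+R)) * Dbeta Ω R β - Ω R β + η R β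
  + cω α Ω * (Ωbar α R β - DR (Ωbar α) R β)

/-- The linearized operator `L₂`. -/
def opL2 (α : ℝ) (Ω η : ℝ → ℝ → ℝ) : ℝ → ℝ → ℝ := fun R β =>
  - DR η R β - (3/(1+R)) * Dbeta η R β + (-2 + 3/(1+R)) * η R β
  + (2/(Real.pi*α)) * tL12 Ω R * ηbar α R β
  + cω α Ω * (ηbar α R β - DR (ηbar α) R β)

/-- `ξ̄` in Cartesian variables. -/
def ξbarC (α : ℝ) (x y : ℝ) : ℝ :=
  -(18*α^2 / cst α) * ∫ z in Set.Ioo (0:ℝ) x,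
      (y/(y^2+z^2)) * (z ^ α * (z^2+y^2) ^ (α/2) / (1 + (z^2+y^2) ^ (α/2))^4)

/-- `ξ̄` in the `(R,β)` variables, via `x = R^{1/α} cos β`, `y = R^{1/α} sin β`. -/
def ξbar (α : ℝ) : ℝ → ℝ → ℝ := fun R β =>
  ξbarC α (R ^ (1/α) * Real.cos β) (R ^ (1/α) * Real.sin β)

/-- The linearized operator `L₃`. -/
def opL3 (α : ℝ) (Ω ξ : ℝ → ℝ → ℝ) : ℝ → ℝ → ℝ := fun R β =>
  - DR ξ R β - (3/(1+R)) * Dbeta ξ R β + (-2 - 3/(1+R)) * ξ R β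
  - (2/(Real.pi*α)) * tL12 Ω R * ξbar α R β
  + cω α Ω * (3 * ξbar α R β - DR (ξbar α) R β)

/-- Weighted Sobolev norm `H^m` with radial weight `w1` and angular weight `w2`:
`‖f‖ = Σ_{0≤k≤m} ‖(D_R^k f)√w1‖₂ + Σ_{i+j≤m−1} ‖(D_R^i D_β^{j+1} f)√w2‖₂`. -/
def Hnorm (m : ℕ) (w1 w2 : ℝ → ℝ → ℝ) (f : ℝ → ℝ → ℝ) : ℝ :=
  (∑ k ∈ Finset.range (m+1),
    norm2 (fun R β => DR^[k] f R β * Real.sqrt (w1 R β)))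
  + ∑ p ∈ (Finset.range (m+1) ×ˢ Finset.range (m+1)).filter
      (fun p => p.1 + p.2 + 1 ≤ m),
      norm2 (fun R β => DR^[p.1] (Dbeta^[p.2+1] f) R β * Real.sqrt (w2 R β))

/-- Sup of `|f|` over the domain `(0,∞)×(0,π/2)`. -/
def supDom (f : ℝ → ℝ → ℝ) : ℝ :=
  ⨆ (R : Set.Ioi (0:ℝ)) (β : Set.Ioo (0:ℝ) (Real.pi/2)), |f R.1 β.1|

/-- The weighted `C¹` norm. -/
def C1norm (α : ℝ) (f : ℝ → ℝ → ℝ) : ℝ :=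
  supDom f + supDom (fun R β => (1+R)/R * DR f R β)
  + supDom (fun R β =>
      (1 + (R * Real.sin (2*β) ^ α) ^ (-(1/40 : ℝ))) * Dbeta f R β)

/-- Boundedness of `f` on the domain. -/
def BddDom (f : ℝ → ℝ → ℝ) : Prop :=
  ∃ M : ℝ, ∀ R ∈ Set.Ioi (0:ℝ), ∀ β ∈ Set.Ioo (0:ℝ) (Real.pi/2), |f R β| ≤ M

/-- Finiteness of the weighted `C¹` norm. -/
def C1Fin (α : ℝ) (f : ℝ → ℝ → ℝ) : Prop :=
  BddDom f ∧ BddDom (fun R β => (1+R)/R * DR f R β) ∧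
  BddDom (fun R β => (1 + (R * Real.sin (2*β) ^ α) ^ (-(1/40 : ℝ))) * Dbeta f R β)

/-- The weighted `W^{l,∞}` norm. -/
def Wnorm (α : ℝ) (l : ℕ) (f : ℝ → ℝ → ℝ) : ℝ :=
  (∑ k ∈ Finset.range (l+1), supDom (DR^[k] f))
  + ∑ p ∈ (Finset.range (l+1) ×ˢ Finset.range (l+1)).filter
      (fun p => p.1 + p.2 ≤ l ∧ 1 ≤ p.2),
      supDom (fun R β => Real.sin (2*β) ^ (-(α/5)) *
        DR^[p.1] (fun R' β' => Dbeta^[p.2] f R' β' / (α/10 + Real.sin (2*β'))) R β)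

/-- Finiteness of the `W^{l,∞}` norm. -/
def WFin (α : ℝ) (l : ℕ) (f : ℝ → ℝ → ℝ) : Prop :=
  (∀ k ≤ l, BddDom (DR^[k] f)) ∧
  ∀ k j : ℕ, k + j ≤ l → 1 ≤ j →
    BddDom (fun R β => Real.sin (2*β) ^ (-(α/5)) *
      DR^[k] (fun R' β' => Dbeta^[j] f R' β' / (α/10 + Real.sin (2*β'))) R β)

/-- `I(f)(x,y) = ∫₀ˣ f(z,y)/z dz`. -/
def Ifun (f : ℝ → ℝ → ℝ) : ℝ → ℝ → ℝ := fun x y => ∫ z in Set.Ioo (0:ℝ) x, f z y / z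

/-- `D_S g = (1/α)(z ∂_z g + y ∂_y g)` in Cartesian variables. -/
def DScart (α : ℝ) (g : ℝ → ℝ → ℝ) : ℝ → ℝ → ℝ := fun a b =>
  (1/α) * (a * deriv (fun a' => g a' b) a + b * deriv (fun b' => g a b') b)

/-- `D_τ g = 2y ∂_y g − 2α (y²/(y²+z²)) D_S g` in Cartesian variables. -/
def DTcart (α : ℝ) (g : ℝ → ℝ → ℝ) : ℝ → ℝ → ℝ := fun a b =>
  2*b * deriv (fun b' => g a b') b - 2*α*(b^2/(b^2+a^2)) * DScart α g a b

/-!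
In the leading-order system the angular variable only enters through the functional `L₁₂`, so for
separated data `Γ(β) f(R, t)` the angular profile contributes a single number, which the
normalization `α / c` cancels. What remains is an ODE in `t`: with `d = T - t + R`, the radial
factors of `Ω` and `η` are `3R / d²` and `6R / d³`, so `∂_t Ω = η` and `∂_t η = (3 / d) η`, while
`3 / d` is also `∫_R^∞ 3 / (T - t + s)² ds`, the radial part of `L₁₂(Ω)`.
-/

section SelfSimilarProfile

/-- The constant `c = (2/π) ∫₀^{π/2} Γ(β) sin(2β) dβ` normalizing the amplitude of a self-similar
solution with angular profile `Γ`. -/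
def angularConst (Γ : ℝ → ℝ) : ℝ :=
  (2/π) * ∫ β in Ioo (0:ℝ) (π/2), Γ β * sin (2*β)

/-- The radial profile `Ω*` of the self-similar `Ω`. -/
def Ωstar (z : ℝ) : ℝ := 3*z/(1+z)^2

/-- The radial profile `η*` of the self-similar `η`. -/
def ηstar (z : ℝ) : ℝ := 6*z/(1+z)^3

/-- The self-similar `Ω` with blowup time `T`, for an arbitrary angular profile `Γ`. -/
def selfSimilarΩ (α T : ℝ) (Γ : ℝ → ℝ) (R β t : ℝ) : ℝ :=
  (α / angularConst Γ) * (T-t)⁻¹ * Γ β * Ωstar (R/(T-t))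

/-- The self-similar `η` with blowup time `T`, for an arbitrary angular profile `Γ`. -/
def selfSimilarη (α T : ℝ) (Γ : ℝ → ℝ) (R β t : ℝ) : ℝ :=
  (α / angularConst Γ) * ((T-t)^2)⁻¹ * Γ β * ηstar (R/(T-t))

variable {α T R t : ℝ} {Γ : ℝ → ℝ}

lemma hasDerivAt_neg_two_div_mul_cos_rpow {β : ℝ} (hα : α + 2 ≠ 0) (hβ : 0 < cos β) :
    HasDerivAt (fun b => -(2/(α+2)) * cos b ^ (α+2)) (cos β ^ α * sin (2*β)) β := by
  refine (((hasDerivAt_cos β).rpow_const (Or.inl hβ.ne')).const_mul (-(2/(α+2)))).congr_deriv ?_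
  rw [sin_two_mul, show α + 2 - 1 = α + 1 by ring, rpow_add_one hβ.ne']
  field_simp

lemma integral_Ioo_cos_rpow_mul_sin_two_mul (hα : -2 < α) :
    ∫ β in Ioo (0:ℝ) (π/2), cos β ^ α * sin (2*β) = 2/(α+2) := by
  have hexp : 0 < α + 2 := by linarith
  have hcos : ∀ β ∈ Ioo (0:ℝ) (π/2), 0 < cos β := fun β hβ =>
    cos_pos_of_mem_Ioo ⟨by linarith [hβ.1, pi_pos], hβ.2⟩
  have hderiv : ∀ β ∈ Ioo (0:ℝ) (π/2), HasDerivAt (fun b => -(2/(α+2)) * cos b ^ (α+2))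
      (cos β ^ α * sin (2*β)) β :=
    fun β hβ => hasDerivAt_neg_two_div_mul_cos_rpow hexp.ne' (hcos β hβ)
  have hcont : Continuous fun b : ℝ => -(2/(α+2)) * cos b ^ (α+2) :=
    (continuous_cos.rpow_const fun _ => Or.inr hexp.le).const_mul _
  have hnonneg : ∀ β ∈ Ioo (0:ℝ) (π/2), 0 ≤ cos β ^ α * sin (2*β) := fun β hβ =>
    mul_nonneg (rpow_nonneg (hcos β hβ).le _)
      (sin_nonneg_of_nonneg_of_le_pi (by linarith [hβ.1]) (by linarith [hβ.2]))
  have hpi : (0:ℝ) ≤ π/2 := by positivity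
  have hint : IntervalIntegrable (fun β => cos β ^ α * sin (2*β)) volume 0 (π/2) :=
    intervalIntegral.intervalIntegrable_deriv_of_nonneg hcont.continuousOn
      (by simpa only [min_eq_left hpi, max_eq_right hpi] using hderiv)
      (by simpa only [min_eq_left hpi, max_eq_right hpi] using hnonneg)
  rw [← integral_Ioc_eq_integral_Ioo, ← intervalIntegral.integral_of_le hpi,
    intervalIntegral.integral_eq_sub_of_hasDerivAt_of_le hpi hcont.continuousOn hderiv hint]
  simp [zero_rpow hexp.ne']

lemma angularConst_Γf_pos (hα : -2 < α) : 0 < angularConst (Γf α) := by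
  have hexp : 0 < α + 2 := by linarith
  have hvalue : angularConst (Γf α) = (2/π) * (2/(α+2)) :=
    congrArg ((2/π) * ·) (integral_Ioo_cos_rpow_mul_sin_two_mul hα)
  rw [hvalue]
  positivity

lemma integral_Ioi_inv_add_sq {a : ℝ} (h : 0 < a + R) :
    ∫ s in Ioi R, ((a+s)^2)⁻¹ = (a+R)⁻¹ := by
  have hderiv : ∀ s ∈ Ici R, HasDerivAt (fun x => -(a+x)⁻¹) ((a+s)^2)⁻¹ s := fun s hs => by
    have hs : a + s ≠ 0 := by linarith [mem_Ici.1 hs]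
    exact (((hasDerivAt_id s).const_add a).fun_inv hs).fun_neg.congr_deriv (by simp [neg_div])
  have hlim : Filter.Tendsto (fun x : ℝ => -(a+x)⁻¹) Filter.atTop (nhds 0) := by
    simpa using (tendsto_inv_atTop_zero.comp
      (Filter.tendsto_atTop_add_const_left _ a Filter.tendsto_id)).neg
  rw [integral_Ioi_of_hasDerivAt_of_nonneg' hderiv (fun s _ => by positivity) hlim]
  ring

lemma hasDerivAt_div_sub_add_pow (k : ℝ) (n : ℕ) (h : T - t + R ≠ 0) :
    HasDerivAt (fun τ => k/(T-τ+R)^n) (n*k/(T-t+R)^(n+1)) t := by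
  have hbase : HasDerivAt (fun τ => T - τ + R) (-1) t :=
    ((hasDerivAt_id t).const_sub T).add_const R
  have hpow := ((hasDerivAt_zpow (-n) _ (Or.inl h)).comp t hbase).const_mul k
  refine (hpow.congr_of_eventuallyEq (.of_eq ?_)).congr_deriv ?_
  · funext τ
    simp [div_eq_mul_inv]
  · rw [show (-n - 1 : ℤ) = -(n + 1 : ℕ) by push_cast; ring, zpow_neg, zpow_natCast]
    push_cast
    ring

lemma L12_mul (Γ f : ℝ → ℝ) (R : ℝ) :
    L12 (fun s β => Γ β * f s) R =
      (∫ β in Ioo (0:ℝ) (π/2), Γ β * sin (2*β)) * ∫ s in Ioi R, f s / s := by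
  simp only [L12, ← integral_const_mul, ← integral_mul_const]
  congr! 4
  ring

lemma selfSimilarΩ_eq (α : ℝ) (Γ : ℝ → ℝ) (R β : ℝ) (ht : t ≠ T) :
    selfSimilarΩ α T Γ R β t = (α / angularConst Γ) * Γ β * (3*R/(T-t+R)^2) := by
  have hτ : T - t ≠ 0 := sub_ne_zero.2 ht.symm
  rw [selfSimilarΩ, Ωstar, one_add_div hτ]
  field_simp

lemma selfSimilarη_eq (α : ℝ) (Γ : ℝ → ℝ) (R β : ℝ) (ht : t ≠ T) :
    selfSimilarη α T Γ R β t = (α / angularConst Γ) * Γ β * (6*R/(T-t+R)^3) := by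
  have hτ : T - t ≠ 0 := sub_ne_zero.2 ht.symm
  rw [selfSimilarη, ηstar, one_add_div hτ]
  field_simp

lemma hasDerivAt_selfSimilarΩ (α : ℝ) (Γ : ℝ → ℝ) (β : ℝ) (ht : t ≠ T) (h : T - t + R ≠ 0) :
    HasDerivAt (selfSimilarΩ α T Γ R β) (selfSimilarη α T Γ R β t) t := by
  have hderiv := (hasDerivAt_div_sub_add_pow (3*R) 2 h).const_mul ((α / angularConst Γ) * Γ β)
  refine (hderiv.congr_of_eventuallyEq ?_).congr_deriv ?_
  · filter_upwards [eventually_ne_nhds ht] with τ hτ using selfSimilarΩ_eq α Γ R β hτ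
  · rw [selfSimilarη_eq α Γ R β ht]
    push_cast
    ring

lemma hasDerivAt_selfSimilarη (α : ℝ) (Γ : ℝ → ℝ) (β : ℝ) (ht : t ≠ T) (h : T - t + R ≠ 0) :
    HasDerivAt (selfSimilarη α T Γ R β) (3/(T-t+R) * selfSimilarη α T Γ R β t) t := by
  have hderiv := (hasDerivAt_div_sub_add_pow (6*R) 3 h).const_mul ((α / angularConst Γ) * Γ β)
  refine (hderiv.congr_of_eventuallyEq ?_).congr_deriv ?_
  · filter_upwards [eventually_ne_nhds ht] with τ hτ using selfSimilarη_eq α Γ R β hτ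
  · rw [selfSimilarη_eq α Γ R β ht]
    push_cast
    field_simp

lemma L12_selfSimilarΩ (α : ℝ) (hc : angularConst Γ ≠ 0) (ht : t < T) (hR : 0 ≤ R) :
    L12 (fun s β => selfSimilarΩ α T Γ s β t) R = π * α / 2 * (3/(T-t+R)) := by
  have hd : 0 < T - t + R := by linarith
  have hradial : ∫ s in Ioi R, 3*s/(T-t+s)^2/s = 3/(T-t+R) := by
    rw [div_eq_mul_inv, ← integral_Ioi_inv_add_sq hd, ← integral_const_mul]
    refine setIntegral_congr_fun measurableSet_Ioi fun s hs => ?_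
    have hs : s ≠ 0 := (hR.trans_lt hs).ne'
    field_simp
  have hangular : ∫ β in Ioo (0:ℝ) (π/2), (α / angularConst Γ) * Γ β * sin (2*β) = π * α / 2 := by
    have hintegral : ∫ β in Ioo (0:ℝ) (π/2), Γ β * sin (2*β) = π / 2 * angularConst Γ := by
      rw [angularConst]
      field_simp
    simp only [mul_assoc, integral_const_mul, hintegral]
    field_simp
  simp only [selfSimilarΩ_eq α Γ _ _ ht.ne, L12_mul, hradial, hangular]

theorem self_similar_solution_of_leading_order_system_general
    (hα : α ≠ 0) (hc : angularConst Γ ≠ 0) (ht : t < T) (hR : 0 ≤ R) (β : ℝ) :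
    HasDerivAt (selfSimilarΩ α T Γ R β) (selfSimilarη α T Γ R β t) t ∧
      HasDerivAt (selfSimilarη α T Γ R β)
        ((2/(π*α)) * L12 (fun s b => selfSimilarΩ α T Γ s b t) R * selfSimilarη α T Γ R β t) t := by
  have hd : T - t + R ≠ 0 := by linarith
  refine ⟨hasDerivAt_selfSimilarΩ α Γ β ht.ne hd,
    (hasDerivAt_selfSimilarη α Γ β ht.ne hd).congr_deriv ?_⟩
  rw [L12_selfSimilarΩ α hc ht hR]
  field_simp

end SelfSimilarProfile

/-- exact self-similar blowup solution of the leading order system. -/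
theorem self_similar_solution_of_leading_order_system
    (α T : ℝ) (hα : 0 < α) (hα' : α < 1/10) (hT : 0 < T) :
    let Γ : ℝ → ℝ := fun β => Real.cos β ^ α
    let c : ℝ := (2/Real.pi) * ∫ β in Set.Ioo (0:ℝ) (Real.pi/2), Γ β * Real.sin (2*β)
    let Ωstar : ℝ → ℝ := fun z => 3*z/(1+z)^2
    let ηstar : ℝ → ℝ := fun z => 6*z/(1+z)^3
    let Ω : ℝ → ℝ → ℝ → ℝ := fun R β t => (α/c) * (T-t)⁻¹ * Γ β * Ωstar (R/(T-t))
    let η : ℝ → ℝ → ℝ → ℝ := fun R β t => (α/c) * ((T-t)^2)⁻¹ * Γ β * ηstar (R/(T-t))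
    0 < c ∧
      ∀ t < T, ∀ R > (0:ℝ), ∀ β ∈ Set.Icc (0:ℝ) (Real.pi/2),
        deriv (fun τ => Ω R β τ) t = η R β t ∧
        deriv (fun τ => η R β τ) t =
          (2/(Real.pi*α)) * L12 (fun R' β' => Ω R' β' t) R * η R β t := by
  have hc : 0 < angularConst (Γf α) := angularConst_Γf_pos (by linarith)
  exact ⟨hc, fun t ht R hR β _ =>
    (self_similar_solution_of_leading_order_system_general hα.ne' hc.ne' ht hR.le β).imp
      HasDerivAt.deriv HasDerivAt.deriv⟩

end Paper
end
end

section
/- Let δ, δ₁, δ₂ > 0 and define the weights φ(R,β) = ((1+R)⁴/R⁴) sin(2β)^{−δ} and ψ(R,β) = ((1+R)⁴/R⁴) (sin β)^{−δ₁} (cos β)^{−δ₂} on (0,∞)×(0,π/2). Define the local operators L₁₀(Ω,η) = −D_R Ω − (3/(1+R)) D_β Ω − Ω + η, L₂₀(η) = −D_R η − (3/(1+R)) D_β η + (−2 + 3/(1+R)) η, and L₃₀(ξ) = −D_R ξ − (3/(1+R)) D_β ξ + (−2 − 3/(1+R)) ξ. Then for all continuously differentiable Ω, η, ξ with compact support contained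 in (0,∞)×(0,π/2): ⟨L₁₀(Ω,η), Ω φ⟩ + ⟨L₂₀(η), η φ⟩ ≤ (−1/4 + 3|1−δ|) (‖Ω φ^{1/2}‖₂² + ‖η φ^{1/2}‖₂²), and ⟨L₃₀(ξ), ξ ψ⟩ ≤ (−1/2 + 3 max(|1−δ₁|, |1−δ₂|)) ‖ξ ψ^{1/2}‖₂². -/
open Real MeasureTheory Set

noncomputable section

namespace Paper

/-- The weight `φ(R,β) = (1+R)⁴R⁻⁴ sin(2β)^{-δ}`. -/
def wphi (δ : ℝ) : ℝ → ℝ → ℝ := fun R β => (1+R)^4 / R^4 * Real.sin (2*β) ^ (-δ)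

/-- The weight `ψ(R,β) = (1+R)⁴R⁻⁴ (sin β)^{-δ₁} (cos β)^{-δ₂}`. -/
def wpsi (δ₁ δ₂ : ℝ) : ℝ → ℝ → ℝ := fun R β =>
  (1+R)^4 / R^4 * Real.sin β ^ (-δ₁) * Real.cos β ^ (-δ₂)

/-- The local operator `L₁₀`. -/
def L10 (Ω η : ℝ → ℝ → ℝ) : ℝ → ℝ → ℝ := fun R β =>
  - DR Ω R β - (3/(1+R)) * Dbeta Ω R β - Ω R β + η R β

/-- The local operator `L₂₀`. -/
def L20 (η : ℝ → ℝ → ℝ) : ℝ → ℝ → ℝ := fun R β =>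
  - DR η R β - (3/(1+R)) * Dbeta η R β + (-2 + 3/(1+R)) * η R β

/-- The local operator `L₃₀`. -/
def L30 (ξ : ℝ → ℝ → ℝ) : ℝ → ℝ → ℝ := fun R β =>
  - DR ξ R β - (3/(1+R)) * Dbeta ξ R β + (-2 - 3/(1+R)) * ξ R β

/-!
Integrating by parts against `f w` moves the transport operator `-D_R - (3/(1+R)) D_β` from `f` onto
the weight and leaves half the divergence of `w` times the transport field. For a weight
`(1+R)⁴ R⁻⁴ a(β)` the radial half-divergence is exactly `1/2 - 2/(1+R)` relative to `w`, and the
angular one is at most `3 M` as soon as `(sin(2β) a)' ≤ 2 M a`; the weights `φ` and `ψ` satisfy this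
with `M = |1-δ|` and `M = max |1-δ₁| |1-δ₂|`. What remains is pointwise: a scalar bound for `L₃₀`,
and a quadratic form in `(Ω, η)` with parameter `1/(1+R) ∈ [0, 1]` for the pair `L₁₀`, `L₂₀`.
-/

section IntegrationByParts

lemma integrable_mul_of_continuousOn_tsupport {X : Type*} [TopologicalSpace X] [MeasurableSpace X]
    [OpensMeasurableSpace X] {μ : Measure X} [IsFiniteMeasureOnCompacts μ] {b f : X → ℝ}
    (hb : ContinuousOn b (tsupport f)) (hf : Continuous f) (hfc : HasCompactSupport f) :
    Integrable (fun x => b x * f x) μ := by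
  rw [← integrableOn_iff_integrable_of_support_subset (s := tsupport f)
    ((Function.support_mul_subset_right b f).trans (subset_tsupport f))]
  exact (hb.mul hf.continuousOn).integrableOn_compact' hfc.isCompact
    (isClosed_tsupport f).measurableSet

variable {E : Type*} [NormedAddCommGroup E] [NormedSpace ℝ E] {U : Set E} {b f g : E → ℝ}

lemma continuousOn_fderiv_apply (hU : IsOpen U) (hb : ContDiffOn ℝ 1 b U) (v : E) :
    ContinuousOn (fun x => fderiv ℝ b x v) U :=
  (hb.continuousOn_fderiv_of_isOpen hU le_rfl).clm_apply continuousOn_const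

lemma integral_mul_fderiv_of_tsupport_subset [FiniteDimensional ℝ E] [MeasurableSpace E]
    [BorelSpace E] {μ : Measure E} [μ.IsAddHaarMeasure] (hU : IsOpen U) (hb : ContDiffOn ℝ 1 b U)
    (hg : ContDiff ℝ 1 g) (hgc : HasCompactSupport g) (hgU : tsupport g ⊆ U) (v : E) :
    ∫ x, b x * fderiv ℝ g x v ∂μ = -∫ x, fderiv ℝ b x v * g x ∂μ := by
  have hb' : ContinuousOn (fun x => fderiv ℝ b x v) U := continuousOn_fderiv_apply hU hb v
  have hg' : Continuous (fun x => fderiv ℝ g x v) :=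
    (hg.continuous_fderiv one_ne_zero).clm_apply continuous_const
  refine integral_mul_fderiv_eq_neg_fderiv_mul_of_integrable
    (integrable_mul_of_continuousOn_tsupport (hb'.mono hgU) hg.continuous hgc)
    (integrable_mul_of_continuousOn_tsupport ?_ hg' (hgc.fderiv_apply ℝ v))
    (integrable_mul_of_continuousOn_tsupport (hb.continuousOn.mono hgU) hg.continuous hgc)
    (fun x hx => (hb.contDiffAt (hU.mem_nhds (hgU hx))).differentiableAt one_ne_zero)
    (fun x _ => hg.differentiable one_ne_zero x)
  exact hb.continuousOn.mono ((tsupport_fderiv_apply_subset ℝ v).trans hgU)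

lemma setIntegral_mul_self_mul_fderiv [FiniteDimensional ℝ E] [MeasurableSpace E] [BorelSpace E]
    {μ : Measure E} [μ.IsAddHaarMeasure] (hU : IsOpen U) (hb : ContDiffOn ℝ 1 b U)
    (hf : ContDiff ℝ 1 f) (hfc : HasCompactSupport f) (hfU : tsupport f ⊆ U) (v : E) :
    ∫ x in U, b x * fderiv ℝ f x v * f x ∂μ =
      -(1 / 2) * ∫ x in U, fderiv ℝ b x v * f x ^ 2 ∂μ := by
  have hf_zero : ∀ x ∉ U, f x = 0 := fun x hx =>
    image_eq_zero_of_notMem_tsupport fun h => hx (hfU h)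
  have hsq_fderiv : ∀ x, fderiv ℝ (fun y => f y ^ 2) x v = 2 * (fderiv ℝ f x v * f x) :=
    fun x => by
      rw [((hf.differentiable one_ne_zero x).hasFDerivAt.pow 2).fderiv]
      simp [mul_assoc, mul_comm (f x)]
  have hparts := integral_mul_fderiv_of_tsupport_subset (μ := μ) (g := fun x => f x ^ 2) hU hb
    (hf.pow 2) (hfc.comp_left (g := (· ^ 2)) (by simp))
    ((tsupport_comp_subset (g := (· ^ 2)) (by simp) f).trans hfU) v
  simp only [hsq_fderiv, mul_left_comm _ (2 : ℝ), integral_const_mul, ← mul_assoc (b _)] at hparts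
  rw [setIntegral_eq_integral_of_forall_compl_eq_zero fun x hx => by simp [hf_zero x hx],
    setIntegral_eq_integral_of_forall_compl_eq_zero fun x hx => by simp [hf_zero x hx]]
  linarith

lemma setIntegral_mul_self_mul_fderiv_add [FiniteDimensional ℝ E] [MeasurableSpace E]
    [BorelSpace E] {μ : Measure E} [μ.IsAddHaarMeasure] {c : E → ℝ} (hU : IsOpen U)
    (hb : ContDiffOn ℝ 1 b U) (hc : ContDiffOn ℝ 1 c U) (hf : ContDiff ℝ 1 f)
    (hfc : HasCompactSupport f) (hfU : tsupport f ⊆ U) (v w : E) :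
    ∫ x in U, (b x * fderiv ℝ f x v + c x * fderiv ℝ f x w) * f x ∂μ =
      -(1 / 2) * ∫ x in U, (fderiv ℝ b x v + fderiv ℝ c x w) * f x ^ 2 ∂μ := by
  have hint {k : E → ℝ} (hk : ContinuousOn k U) : IntegrableOn (fun x => k x * f x) U μ :=
    (integrable_mul_of_continuousOn_tsupport (hk.mono hfU) hf.continuous hfc).integrableOn
  have hint_left {k : E → ℝ} (hk : ContDiffOn ℝ 1 k U) (u : E) :
      IntegrableOn (fun x => k x * fderiv ℝ f x u * f x) U μ :=
    hint (hk.continuousOn.mul (continuousOn_fderiv_apply hU hf.contDiffOn u))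
  have hint_right {k : E → ℝ} (hk : ContDiffOn ℝ 1 k U) (u : E) :
      IntegrableOn (fun x => fderiv ℝ k x u * f x ^ 2) U μ := by
    simpa only [pow_two, mul_assoc, Pi.mul_apply] using
      hint ((continuousOn_fderiv_apply hU hk u).mul hf.continuous.continuousOn)
  simp only [add_mul]
  rw [integral_add (hint_left hb v) (hint_left hc w),
    integral_add (hint_right hb v) (hint_right hc w),
    setIntegral_mul_self_mul_fderiv hU hb hf hfc hfU,
    setIntegral_mul_self_mul_fderiv hU hc hf hfc hfU, mul_add]

end IntegrationByParts

section PartialDerivatives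

variable {F : ℝ × ℝ → ℝ} {x y : ℝ}

lemma hasDerivAt_prodMk_left (hF : DifferentiableAt ℝ F (x, y)) :
    HasDerivAt (fun r => F (r, y)) (fderiv ℝ F (x, y) (1, 0)) x :=
  hF.hasFDerivAt.comp_hasDerivAt x ((hasDerivAt_id x).prodMk (hasDerivAt_const x y))

lemma hasDerivAt_prodMk_right (hF : DifferentiableAt ℝ F (x, y)) :
    HasDerivAt (fun s => F (x, s)) (fderiv ℝ F (x, y) (0, 1)) y :=
  hF.hasFDerivAt.comp_hasDerivAt y ((hasDerivAt_const y x).prodMk (hasDerivAt_id y))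

end PartialDerivatives

section Domain

variable {f g k w : ℝ → ℝ → ℝ}

lemma isOpen_Qdom : IsOpen Qdom := isOpen_Ioi.prod isOpen_Ioo

lemma one_add_fst_ne_zero {p : ℝ × ℝ} (hp : p ∈ Qdom) : 1 + p.1 ≠ 0 := by
  have hR : 0 < p.1 := hp.1
  positivity

namespace suppIn

lemma hasCompactSupport (hf : suppIn f) : HasCompactSupport (Function.uncurry f) := by
  obtain ⟨K, hK, -, hfK⟩ := hf
  exact HasCompactSupport.intro hK fun p hp => hfK p.1 p.2 hp

lemma tsupport_subset (hf : suppIn f) : tsupport (Function.uncurry f) ⊆ Qdom := by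
  obtain ⟨K, hK, hKQ, hfK⟩ := hf
  refine (closure_minimal (fun p hp => ?_) hK.isClosed).trans hKQ
  by_contra hpK
  exact hp (hfK p.1 p.2 hpK)

lemma integrable2_mul_mul (hs : suppIn f) (hf : Continuous (Function.uncurry f))
    (hk : ContinuousOn (Function.uncurry k) Qdom) (hw : ContinuousOn (Function.uncurry w) Qdom) :
    Integrable2 (fun R β => k R β * (f R β * w R β)) := by
  refine (integrable_mul_of_continuousOn_tsupport ((hk.mul hw).mono hs.tsupport_subset) hf
    hs.hasCompactSupport).integrableOn.congr_fun (fun p _ => ?_) isOpen_Qdom.measurableSet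
  simp only [Pi.mul_apply, Function.uncurry]
  ring

end suppIn

lemma inner2_eq_setIntegral (hfg : Integrable2 fun R β => f R β * g R β) :
    inner2 f g = ∫ p in Qdom, Function.uncurry (fun R β => f R β * g R β) p :=
  (setIntegral_prod _ hfg).symm

lemma inner2_add_left (hf : Integrable2 fun R β => f R β * k R β)
    (hg : Integrable2 fun R β => g R β * k R β) :
    inner2 (fun R β => f R β + g R β) k = inner2 f k + inner2 g k := by
  have hfg : Integrable2 fun R β => (f R β + g R β) * k R β := by
    simpa only [add_mul] using! hf.fun_add hg
  rw [inner2_eq_setIntegral hf, inner2_eq_setIntegral hg, inner2_eq_setIntegral hfg,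
    ← integral_add hf hg]
  simp only [add_mul, Function.uncurry]

lemma inner2_const_mul_left (c : ℝ) (f g : ℝ → ℝ → ℝ) :
    inner2 (fun R β => c * f R β) g = c * inner2 f g := by
  simp only [inner2, mul_assoc, integral_const_mul]

lemma inner2_le_inner2 (hfg : Integrable2 fun R β => f R β * g R β)
    (hkw : Integrable2 fun R β => k R β * w R β)
    (hle : ∀ p ∈ Qdom, f p.1 p.2 * g p.1 p.2 ≤ k p.1 p.2 * w p.1 p.2) :
    inner2 f g ≤ inner2 k w := by
  rw [inner2_eq_setIntegral hfg, inner2_eq_setIntegral hkw]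
  exact setIntegral_mono_on hfg hkw isOpen_Qdom.measurableSet hle

lemma inner2_add_inner2_le_inner2_add_inner2 {f' g' k' w' : ℝ → ℝ → ℝ}
    (hfg : Integrable2 fun R β => f R β * g R β) (hfg' : Integrable2 fun R β => f' R β * g' R β)
    (hkw : Integrable2 fun R β => k R β * w R β) (hkw' : Integrable2 fun R β => k' R β * w' R β)
    (hle : ∀ p ∈ Qdom, f p.1 p.2 * g p.1 p.2 + f' p.1 p.2 * g' p.1 p.2 ≤
      k p.1 p.2 * w p.1 p.2 + k' p.1 p.2 * w' p.1 p.2) :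
    inner2 f g + inner2 f' g' ≤ inner2 k w + inner2 k' w' := by
  rw [inner2_eq_setIntegral hfg, inner2_eq_setIntegral hfg', inner2_eq_setIntegral hkw,
    inner2_eq_setIntegral hkw', ← integral_add hfg hfg', ← integral_add hkw hkw']
  exact setIntegral_mono_on (hfg.add hfg') (hkw.add hkw') isOpen_Qdom.measurableSet hle

lemma norm2_mul_sqrt_sq (hw : ∀ p ∈ Qdom, 0 ≤ w p.1 p.2) :
    norm2 (fun R β => f R β * √(w R β)) ^ 2 = inner2 f (fun R β => f R β * w R β) := by
  have hnonneg : 0 ≤ inner2 (fun R β => f R β * √(w R β)) (fun R β => f R β * √(w R β)) :=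
    integral_nonneg fun R => integral_nonneg fun β => mul_self_nonneg _
  rw [norm2, Real.sq_sqrt hnonneg]
  refine setIntegral_congr_fun measurableSet_Ioi fun R hR =>
    setIntegral_congr_fun measurableSet_Ioo fun β hβ => ?_
  have hsq : √(w R β) * √(w R β) = w R β := Real.mul_self_sqrt (hw (R, β) ⟨hR, hβ⟩)
  linear_combination f R β ^ 2 * hsq

end Domain

section Transport

variable {f w : ℝ → ℝ → ℝ}

/-- The transport operator `-D_R - (3/(1+R)) D_β` common to `L₁₀`, `L₂₀` and `L₃₀`. -/
def transport (f : ℝ → ℝ → ℝ) : ℝ → ℝ → ℝ := fun R β =>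
  -DR f R β - 3 / (1 + R) * Dbeta f R β

/-- The divergence `∂_R (R w) + ∂_β ((3/(1+R)) sin(2β) w)` of the weight `w` times the vector field
along which `transport` differentiates. -/
def transportDiv (w : ℝ → ℝ → ℝ) (p : ℝ × ℝ) : ℝ :=
  fderiv ℝ (fun q : ℝ × ℝ => q.1 * w q.1 q.2) p (1, 0) +
    fderiv ℝ (fun q : ℝ × ℝ => 3 / (1 + q.1) * Real.sin (2 * q.2) * w q.1 q.2) p (0, 1)

lemma contDiffOn_radialCoeff_mul (hw : ContDiffOn ℝ 1 (Function.uncurry w) Qdom) :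
    ContDiffOn ℝ 1 (fun q : ℝ × ℝ => q.1 * w q.1 q.2) Qdom :=
  contDiff_fst.contDiffOn.mul hw

lemma contDiffOn_angularCoeff_mul (hw : ContDiffOn ℝ 1 (Function.uncurry w) Qdom) :
    ContDiffOn ℝ 1 (fun q : ℝ × ℝ => 3 / (1 + q.1) * Real.sin (2 * q.2) * w q.1 q.2) Qdom := by
  fun_prop (disch := exact fun _ => one_add_fst_ne_zero)

lemma transport_eq_fderiv {p : ℝ × ℝ} (hf : DifferentiableAt ℝ (Function.uncurry f) p) :
    transport f p.1 p.2 = -(p.1 * fderiv ℝ (Function.uncurry f) p (1, 0)) -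
      3 / (1 + p.1) * (Real.sin (2 * p.2) * fderiv ℝ (Function.uncurry f) p (0, 1)) := by
  have hR := (hasDerivAt_prodMk_left hf).deriv
  have hβ := (hasDerivAt_prodMk_right hf).deriv
  simp only [Function.uncurry_apply_pair] at hR hβ
  rw [transport, DR, Dbeta, hR, hβ]

lemma continuousOn_transport (hf : ContDiff ℝ 1 (Function.uncurry f)) :
    ContinuousOn (Function.uncurry (transport f)) Qdom := by
  refine ContinuousOn.congr (f := fun p : ℝ × ℝ => _) ?_ fun p _ =>
    transport_eq_fderiv (hf.differentiable one_ne_zero p)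
  fun_prop (disch := exact fun _ => one_add_fst_ne_zero)

lemma continuousOn_transportDiv (hw : ContDiffOn ℝ 1 (Function.uncurry w) Qdom) :
    ContinuousOn (transportDiv w) Qdom :=
  (continuousOn_fderiv_apply isOpen_Qdom (contDiffOn_radialCoeff_mul hw) _).add
    (continuousOn_fderiv_apply isOpen_Qdom (contDiffOn_angularCoeff_mul hw) _)

lemma integrable2_transportDiv_mul (hf : Continuous (Function.uncurry f)) (hs : suppIn f)
    (hw : ContDiffOn ℝ 1 (Function.uncurry w) Qdom) :
    Integrable2 fun R β => 1 / 2 * transportDiv w (R, β) * f R β * f R β := by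
  have hdiv := continuousOn_transportDiv hw
  have hrate : ContinuousOn (fun p => 1 / 2 * transportDiv w p) Qdom := by fun_prop
  simpa only [mul_assoc] using hs.integrable2_mul_mul
    (k := fun R β => 1 / 2 * transportDiv w (R, β)) hf hrate hf.continuousOn

lemma inner2_transport_mul_self (hf : ContDiff ℝ 1 (Function.uncurry f)) (hs : suppIn f)
    (hw : ContDiffOn ℝ 1 (Function.uncurry w) Qdom) :
    inner2 (transport f) (fun R β => f R β * w R β) =
      inner2 (fun R β => 1 / 2 * transportDiv w (R, β) * f R β) f := by
  rw [inner2_eq_setIntegral (hs.integrable2_mul_mul hf.continuous (continuousOn_transport hf)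
      hw.continuousOn), inner2_eq_setIntegral (integrable2_transportDiv_mul hf.continuous hs hw)]
  set F := Function.uncurry f
  calc ∫ p in Qdom, transport f p.1 p.2 * (f p.1 p.2 * w p.1 p.2)
      = ∫ p in Qdom, -((p.1 * w p.1 p.2 * fderiv ℝ F p (1, 0) +
          3 / (1 + p.1) * Real.sin (2 * p.2) * w p.1 p.2 * fderiv ℝ F p (0, 1)) * F p) := by
        refine integral_congr_ae (.of_forall fun p => ?_)
        simp only [transport_eq_fderiv (hf.differentiable one_ne_zero p), F, Function.uncurry]
        ring
    _ = 1 / 2 * ∫ p in Qdom, transportDiv w p * F p ^ 2 := by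
        rw [integral_neg, setIntegral_mul_self_mul_fderiv_add isOpen_Qdom
          (contDiffOn_radialCoeff_mul hw) (contDiffOn_angularCoeff_mul hw) hf
          hs.hasCompactSupport hs.tsupport_subset, neg_mul, neg_neg]
        rfl
    _ = ∫ p in Qdom, 1 / 2 * transportDiv w p * f p.1 p.2 * f p.1 p.2 := by
        rw [← integral_const_mul]
        refine integral_congr_ae (.of_forall fun p => ?_)
        simp only [F, Function.uncurry]
        ring

end Transport

section SeparatedWeight

variable {a : ℝ → ℝ} {M : ℝ} {f h : ℝ → ℝ → ℝ}

/-- A `C¹` weight `a(β) ≥ 0` on `(0, π/2)` for which the divergence `(sin(2β) a)'` of the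
angular part of the transport field is at most `2 M a`. -/
structure IsAngularWeight (a : ℝ → ℝ) (M : ℝ) : Prop where
  contDiffOn : ContDiffOn ℝ 1 a (Ioo 0 (π / 2))
  nonneg : ∀ β ∈ Ioo 0 (π / 2), 0 ≤ a β
  deriv_sin_two_mul_le : ∀ β ∈ Ioo 0 (π / 2),
    deriv (fun b => Real.sin (2 * b) * a b) β ≤ 2 * M * a β

/-- The weight `(1+R)⁴ R⁻⁴ a(β)` with the radial profile shared by `φ` and `ψ`. -/
def radialWeight (a : ℝ → ℝ) : ℝ → ℝ → ℝ := fun R β => (1 + R) ^ 4 / R ^ 4 * a β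

/-- The rate at which `transport` can make the energy weighted by `radialWeight a` grow, when `a` is
an angular weight with constant `M`: half of the relative divergence, bounded from above. -/
def transportRate (M R : ℝ) : ℝ := 1 / 2 - 2 / (1 + R) + 3 * M

lemma contDiffOn_radialWeight (ha : ContDiffOn ℝ 1 a (Ioo 0 (π / 2))) :
    ContDiffOn ℝ 1 (Function.uncurry (radialWeight a)) Qdom := by
  refine ContDiffOn.mul (ContDiffOn.div (by fun_prop) (by fun_prop) fun p hp => ?_)
    (ha.comp contDiff_snd.contDiffOn fun p hp => hp.2)
  exact pow_ne_zero 4 (ne_of_gt hp.1)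

lemma radialWeight_nonneg (ha : ∀ β ∈ Ioo 0 (π / 2), 0 ≤ a β) :
    ∀ p ∈ Qdom, 0 ≤ radialWeight a p.1 p.2 := fun p hp =>
  mul_nonneg (by positivity) (ha p.2 hp.2)

lemma hasDerivAt_mul_radialWeight {R : ℝ} (hR : 0 < R) (β : ℝ) :
    HasDerivAt (fun r => r * radialWeight a r β) ((1 - 4 / (1 + R)) * radialWeight a R β) R := by
  have hnum : HasDerivAt (fun r : ℝ => (1 + r) ^ 4) (4 * (1 + R) ^ 3) R := by
    simpa using ((hasDerivAt_id R).const_add 1).fun_pow 4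
  have hden : HasDerivAt (fun r : ℝ => r ^ 4) (4 * R ^ 3) R := by
    simpa using hasDerivAt_pow 4 R
  refine ((hasDerivAt_id R).mul
    ((hnum.fun_div hden (by positivity)).mul_const (a β))).congr_deriv ?_
  simp only [radialWeight, id]
  field_simp
  ring

lemma transportDiv_radialWeight (ha : ContDiffOn ℝ 1 a (Ioo 0 (π / 2))) {p : ℝ × ℝ}
    (hp : p ∈ Qdom) :
    transportDiv (radialWeight a) p = (1 - 4 / (1 + p.1)) * radialWeight a p.1 p.2 +
      3 / (1 + p.1) * ((1 + p.1) ^ 4 / p.1 ^ 4 * deriv (fun b => Real.sin (2 * b) * a b) p.2) := by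
  obtain ⟨R, β⟩ := p
  have hw := contDiffOn_radialWeight ha
  have hdiff {c : ℝ × ℝ → ℝ} (hc : ContDiffOn ℝ 1 c Qdom) : DifferentiableAt ℝ c (R, β) :=
    (hc.contDiffAt (isOpen_Qdom.mem_nhds hp)).differentiableAt one_ne_zero
  have hradial := (hasDerivAt_prodMk_left (hdiff (contDiffOn_radialCoeff_mul hw))).unique
    (hasDerivAt_mul_radialWeight hp.1 β)
  have hangular := (hasDerivAt_prodMk_right (hdiff (contDiffOn_angularCoeff_mul hw))).deriv
  have hfactor : (fun b => 3 / (1 + R) * Real.sin (2 * b) * radialWeight a R b) =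
      fun b => 3 / (1 + R) * ((1 + R) ^ 4 / R ^ 4) * (Real.sin (2 * b) * a b) := by
    funext b
    rw [radialWeight]
    ring
  rw [hfactor, deriv_const_mul_field] at hangular
  rw [transportDiv, hradial, ← hangular, mul_assoc (3 / (1 + R))]

lemma IsAngularWeight.transportDiv_le (ha : IsAngularWeight a M) (hM : 0 ≤ M) {p : ℝ × ℝ}
    (hp : p ∈ Qdom) :
    transportDiv (radialWeight a) p ≤ 2 * transportRate M p.1 * radialWeight a p.1 p.2 := by
  have hR : 0 < p.1 := hp.1
  have hw := radialWeight_nonneg ha.nonneg p hp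
  calc transportDiv (radialWeight a) p
      = (1 - 4 / (1 + p.1)) * radialWeight a p.1 p.2 +
          3 / (1 + p.1) *
            ((1 + p.1) ^ 4 / p.1 ^ 4 * deriv (fun b => Real.sin (2 * b) * a b) p.2) :=
        transportDiv_radialWeight ha.contDiffOn hp
    _ ≤ (1 - 4 / (1 + p.1)) * radialWeight a p.1 p.2 +
          3 / (1 + p.1) * ((1 + p.1) ^ 4 / p.1 ^ 4 * (2 * M * a p.2)) := by
        gcongr
        exact ha.deriv_sin_two_mul_le p.2 hp.2
    _ = (1 - 4 / (1 + p.1)) * radialWeight a p.1 p.2 +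
          1 / (1 + p.1) * (6 * M * radialWeight a p.1 p.2) := by
        rw [radialWeight]
        ring
    _ ≤ (1 - 4 / (1 + p.1)) * radialWeight a p.1 p.2 + 1 * (6 * M * radialWeight a p.1 p.2) := by
        gcongr
        exact (div_le_one (by positivity)).2 (by linarith)
    _ = 2 * transportRate M p.1 * radialWeight a p.1 p.2 := by
        rw [transportRate]
        ring

lemma continuousOn_transportRate_mul (hf : Continuous (Function.uncurry f)) :
    ContinuousOn (Function.uncurry fun R β => transportRate M R * f R β) Qdom := by
  simp only [transportRate]
  fun_prop (disch := exact fun _ => one_add_fst_ne_zero)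

lemma IsAngularWeight.inner2_transport_le (ha : IsAngularWeight a M) (hM : 0 ≤ M)
    (hf : ContDiff ℝ 1 (Function.uncurry f)) (hs : suppIn f) :
    inner2 (transport f) (fun R β => f R β * radialWeight a R β) ≤
      inner2 (fun R β => transportRate M R * f R β)
        (fun R β => f R β * radialWeight a R β) := by
  have hw := contDiffOn_radialWeight ha.contDiffOn
  rw [inner2_transport_mul_self hf hs hw]
  refine inner2_le_inner2 (integrable2_transportDiv_mul hf.continuous hs hw)
    (hs.integrable2_mul_mul hf.continuous (continuousOn_transportRate_mul hf.continuous)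
      hw.continuousOn) fun p hp => ?_
  have hdiv := mul_le_mul_of_nonneg_right (ha.transportDiv_le hM hp) (sq_nonneg (f p.1 p.2))
  linear_combination 1 / 2 * hdiv

lemma IsAngularWeight.inner2_transport_add_le (ha : IsAngularWeight a M) (hM : 0 ≤ M)
    (hf : ContDiff ℝ 1 (Function.uncurry f)) (hs : suppIn f)
    (hh : ContinuousOn (Function.uncurry h) Qdom) :
    inner2 (fun R β => transport f R β + h R β) (fun R β => f R β * radialWeight a R β) ≤
      inner2 (fun R β => transportRate M R * f R β + h R β)
        (fun R β => f R β * radialWeight a R β) := by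
  have hint {k : ℝ → ℝ → ℝ} (hk : ContinuousOn (Function.uncurry k) Qdom) :=
    hs.integrable2_mul_mul hf.continuous hk (contDiffOn_radialWeight ha.contDiffOn).continuousOn
  rw [inner2_add_left (hint (continuousOn_transport hf)) (hint hh),
    inner2_add_left (hint (continuousOn_transportRate_mul hf.continuous)) (hint hh)]
  gcongr
  exact ha.inner2_transport_le hM hf hs

end SeparatedWeight

section LocalOperators

lemma L10_eq_transport_add (Ω η : ℝ → ℝ → ℝ) :
    L10 Ω η = fun R β => transport Ω R β + (-Ω R β + η R β) := by
  funext R β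
  simp only [L10, transport]
  ring

lemma L20_eq_transport_add (η : ℝ → ℝ → ℝ) :
    L20 η = fun R β => transport η R β + (-2 + 3 / (1 + R)) * η R β := rfl

lemma L30_eq_transport_add (ξ : ℝ → ℝ → ℝ) :
    L30 ξ = fun R β => transport ξ R β + (-2 - 3 / (1 + R)) * ξ R β := rfl

variable {a : ℝ → ℝ} {M : ℝ} {Ω η ξ : ℝ → ℝ → ℝ}

-- The left side is affine in `t`; `t = 0` and `t = 1` each leave a sum of squares.
lemma coupled_form_le {t : ℝ} (ht₀ : 0 ≤ t) (ht₁ : t ≤ 1) (x y : ℝ) :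
    (-(1 / 2) - 2 * t) * x ^ 2 + x * y + (-(3 / 2) + t) * y ^ 2 ≤ -(1 / 4) * (x ^ 2 + y ^ 2) := by
  have h₀ : 0 ≤ (1 - t) * ((x / 2 - y) ^ 2 + y ^ 2 / 4) :=
    mul_nonneg (sub_nonneg.2 ht₁) (by positivity)
  have h₁ : 0 ≤ t * ((y / 2 - x) ^ 2 + 5 / 4 * x ^ 2) := by positivity
  linarith

lemma IsAngularWeight.inner2_L10_add_inner2_L20_le (ha : IsAngularWeight a M) (hM : 0 ≤ M)
    (hΩ : ContDiff ℝ 1 (Function.uncurry Ω)) (hη : ContDiff ℝ 1 (Function.uncurry η))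
    (hΩs : suppIn Ω) (hηs : suppIn η) :
    inner2 (L10 Ω η) (fun R β => Ω R β * radialWeight a R β) +
        inner2 (L20 η) (fun R β => η R β * radialWeight a R β) ≤
      (-(1 / 4) + 3 * M) * (norm2 (fun R β => Ω R β * √(radialWeight a R β)) ^ 2 +
        norm2 (fun R β => η R β * √(radialWeight a R β)) ^ 2) := by
  have hΩc := hΩ.continuous
  have hηc := hη.continuous
  have hw := (contDiffOn_radialWeight ha.contDiffOn).continuousOn
  have hint {f k : ℝ → ℝ → ℝ} (hf : Continuous (Function.uncurry f)) (hs : suppIn f)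
      (hk : ContinuousOn (Function.uncurry k) Qdom) := hs.integrable2_mul_mul hf hk hw
  have hΩη : ContinuousOn (Function.uncurry fun R β => -Ω R β + η R β) Qdom := by fun_prop
  have hηη : ContinuousOn (Function.uncurry fun R β => (-2 + 3 / (1 + R)) * η R β) Qdom := by
    fun_prop (disch := exact fun _ => one_add_fst_ne_zero)
  rw [norm2_mul_sqrt_sq (radialWeight_nonneg ha.nonneg),
    norm2_mul_sqrt_sq (radialWeight_nonneg ha.nonneg), mul_add, ← inner2_const_mul_left,
    ← inner2_const_mul_left, L10_eq_transport_add, L20_eq_transport_add]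
  refine (add_le_add (ha.inner2_transport_add_le hM hΩ hΩs hΩη)
    (ha.inner2_transport_add_le hM hη hηs hηη)).trans ?_
  refine inner2_add_inner2_le_inner2_add_inner2
    (hint hΩc hΩs ((continuousOn_transportRate_mul hΩc).fun_add hΩη))
    (hint hηc hηs ((continuousOn_transportRate_mul hηc).fun_add hηη))
    (hint hΩc hΩs (by fun_prop)) (hint hηc hηs (by fun_prop)) fun p hp => ?_
  have hR : 0 < p.1 := hp.1
  have ht : 1 / (1 + p.1) ≤ 1 := (div_le_one (by positivity)).2 (by linarith)
  have hform := mul_le_mul_of_nonneg_right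
    (coupled_form_le (by positivity) ht (Ω p.1 p.2) (η p.1 p.2))
    (radialWeight_nonneg ha.nonneg p hp)
  simp only [transportRate]
  linear_combination hform

lemma IsAngularWeight.inner2_L30_le (ha : IsAngularWeight a M) (hM : 0 ≤ M)
    (hξ : ContDiff ℝ 1 (Function.uncurry ξ)) (hs : suppIn ξ) :
    inner2 (L30 ξ) (fun R β => ξ R β * radialWeight a R β) ≤
      (-(3 / 2) + 3 * M) * norm2 (fun R β => ξ R β * √(radialWeight a R β)) ^ 2 := by
  have hξc := hξ.continuous
  have hint {k : ℝ → ℝ → ℝ} (hk : ContinuousOn (Function.uncurry k) Qdom) :=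
    hs.integrable2_mul_mul hξc hk (contDiffOn_radialWeight ha.contDiffOn).continuousOn
  have hξξ : ContinuousOn (Function.uncurry fun R β => (-2 - 3 / (1 + R)) * ξ R β) Qdom := by
    fun_prop (disch := exact fun _ => one_add_fst_ne_zero)
  rw [norm2_mul_sqrt_sq (radialWeight_nonneg ha.nonneg), ← inner2_const_mul_left,
    L30_eq_transport_add]
  refine (ha.inner2_transport_add_le hM hξ hs hξξ).trans <| inner2_le_inner2
    (hint ((continuousOn_transportRate_mul hξc).fun_add hξξ)) (hint (by fun_prop)) fun p hp => ?_
  have hR : 0 < p.1 := hp.1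
  have hsurplus : 0 ≤ 5 / (1 + p.1) * (ξ p.1 p.2 ^ 2 * radialWeight a p.1 p.2) :=
    mul_nonneg (by positivity) (mul_nonneg (sq_nonneg _) (radialWeight_nonneg ha.nonneg p hp))
  simp only [transportRate]
  linear_combination hsurplus

end LocalOperators

section Angular

lemma sin_two_mul_pos {β : ℝ} (hβ : β ∈ Ioo 0 (π / 2)) : 0 < Real.sin (2 * β) :=
  Real.sin_pos_of_pos_of_lt_pi (by linarith [hβ.1]) (by linarith [hβ.2])

lemma hasDerivAt_sin_two_mul (β : ℝ) :
    HasDerivAt (fun b => Real.sin (2 * b)) (Real.cos (2 * β) * 2) β := by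
  simpa using ((hasDerivAt_id β).const_mul 2).sin

lemma isAngularWeight_sin_two_mul_rpow (δ : ℝ) :
    IsAngularWeight (fun β => Real.sin (2 * β) ^ (-δ)) |1 - δ| where
  contDiffOn := ContDiffOn.rpow_const_of_ne (by fun_prop) fun β hβ => (sin_two_mul_pos hβ).ne'
  nonneg β hβ := Real.rpow_nonneg (sin_two_mul_pos hβ).le _
  deriv_sin_two_mul_le β hβ := by
    have hs := sin_two_mul_pos hβ
    have hsin := hasDerivAt_sin_two_mul β
    have hderiv : deriv (fun b => Real.sin (2 * b) * Real.sin (2 * b) ^ (-δ)) β =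
        2 * ((1 - δ) * Real.cos (2 * β)) * Real.sin (2 * β) ^ (-δ) := by
      rw [(hsin.fun_mul (hsin.rpow_const (Or.inl hs.ne'))).deriv, Real.rpow_sub_one hs.ne']
      field_simp
      ring
    have hrate : (1 - δ) * Real.cos (2 * β) ≤ |1 - δ| :=
      (le_abs_self _).trans <| (abs_mul _ _).trans_le <|
        mul_le_of_le_one_right (abs_nonneg _) (Real.abs_cos_le_one _)
    rw [hderiv]
    gcongr

lemma isAngularWeight_sin_rpow_mul_cos_rpow (δ₁ δ₂ : ℝ) :
    IsAngularWeight (fun β => Real.sin β ^ (-δ₁) * Real.cos β ^ (-δ₂))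
      (max |1 - δ₁| |1 - δ₂|) := by
  have hsin {β : ℝ} (hβ : β ∈ Ioo 0 (π / 2)) : 0 < Real.sin β :=
    Real.sin_pos_of_pos_of_lt_pi hβ.1 (by linarith [hβ.2, Real.pi_pos])
  have hcos {β : ℝ} (hβ : β ∈ Ioo 0 (π / 2)) : 0 < Real.cos β :=
    Real.cos_pos_of_mem_Ioo ⟨by linarith [hβ.1, Real.pi_pos], hβ.2⟩
  refine ⟨?_, fun β hβ => ?_, fun β hβ => ?_⟩
  · exact (Real.contDiff_sin.contDiffOn.rpow_const_of_ne fun β hβ => (hsin hβ).ne').mul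
      (Real.contDiff_cos.contDiffOn.rpow_const_of_ne fun β hβ => (hcos hβ).ne')
  · exact mul_nonneg (Real.rpow_nonneg (hsin hβ).le _) (Real.rpow_nonneg (hcos hβ).le _)
  · have hs := hsin hβ
    have hc := hcos hβ
    have hderiv : deriv (fun b => Real.sin (2 * b) * (Real.sin b ^ (-δ₁) * Real.cos b ^ (-δ₂))) β =
        2 * ((1 - δ₁) * Real.cos β ^ 2 + -(1 - δ₂) * Real.sin β ^ 2) *
          (Real.sin β ^ (-δ₁) * Real.cos β ^ (-δ₂)) := by
      rw [((hasDerivAt_sin_two_mul β).fun_mul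
          (((Real.hasDerivAt_sin β).rpow_const (Or.inl hs.ne')).fun_mul
            ((Real.hasDerivAt_cos β).rpow_const (Or.inl hc.ne')))).deriv,
        Real.rpow_sub_one hs.ne', Real.rpow_sub_one hc.ne', Real.sin_two_mul, Real.cos_two_mul']
      field_simp
      ring
    have hrate : (1 - δ₁) * Real.cos β ^ 2 + -(1 - δ₂) * Real.sin β ^ 2 ≤
        max |1 - δ₁| |1 - δ₂| := by
      calc (1 - δ₁) * Real.cos β ^ 2 + -(1 - δ₂) * Real.sin β ^ 2
          ≤ max |1 - δ₁| |1 - δ₂| * Real.cos β ^ 2 + max |1 - δ₁| |1 - δ₂| * Real.sin β ^ 2 := by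
            gcongr
            · exact (le_abs_self _).trans (le_max_left _ _)
            · exact (neg_le_abs _).trans (le_max_right _ _)
        _ = max |1 - δ₁| |1 - δ₂| := by rw [← mul_add, Real.cos_sq_add_sin_sq, mul_one]
    rw [hderiv]
    gcongr

end Angular

lemma wphi_eq_radialWeight (δ : ℝ) :
    wphi δ = radialWeight fun β => Real.sin (2 * β) ^ (-δ) := rfl

lemma wpsi_eq_radialWeight (δ₁ δ₂ : ℝ) :
    wpsi δ₁ δ₂ = radialWeight fun β => Real.sin β ^ (-δ₁) * Real.cos β ^ (-δ₂) := by
  funext R β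
  rw [wpsi, radialWeight, mul_assoc]

theorem damping_local_operators_general (δ δ₁ δ₂ : ℝ) (Ω η ξ : ℝ → ℝ → ℝ)
    (hΩ : ContDiff ℝ 1 (Function.uncurry Ω)) (hη : ContDiff ℝ 1 (Function.uncurry η))
    (hξ : ContDiff ℝ 1 (Function.uncurry ξ)) (hΩs : suppIn Ω) (hηs : suppIn η) (hξs : suppIn ξ) :
    inner2 (L10 Ω η) (fun R β => Ω R β * wphi δ R β)
        + inner2 (L20 η) (fun R β => η R β * wphi δ R β)
      ≤ (-(1 / 4) + 3 * |1 - δ|) * (norm2 (fun R β => Ω R β * √(wphi δ R β)) ^ 2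
          + norm2 (fun R β => η R β * √(wphi δ R β)) ^ 2) ∧
    inner2 (L30 ξ) (fun R β => ξ R β * wpsi δ₁ δ₂ R β)
      ≤ (-(3 / 2) + 3 * max |1 - δ₁| |1 - δ₂|) *
        norm2 (fun R β => ξ R β * √(wpsi δ₁ δ₂ R β)) ^ 2 := by
  rw [wphi_eq_radialWeight, wpsi_eq_radialWeight]
  exact ⟨(isAngularWeight_sin_two_mul_rpow δ).inner2_L10_add_inner2_L20_le (abs_nonneg _)
      hΩ hη hΩs hηs,
    (isAngularWeight_sin_rpow_mul_cos_rpow δ₁ δ₂).inner2_L30_le (le_max_of_le_left (abs_nonneg _))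
      hξ hξs⟩

/-- damping estimates for the local operators `L₁₀, L₂₀, L₃₀`. -/
theorem damping_local_operators
    (δ δ₁ δ₂ : ℝ) (hδ : 0 < δ) (hδ₁ : 0 < δ₁) (hδ₂ : 0 < δ₂)
    (Ω η ξ : ℝ → ℝ → ℝ)
    (hΩ : ContDiff ℝ 1 (Function.uncurry Ω))
    (hη : ContDiff ℝ 1 (Function.uncurry η))
    (hξ : ContDiff ℝ 1 (Function.uncurry ξ))
    (hΩs : suppIn Ω) (hηs : suppIn η) (hξs : suppIn ξ) :
    inner2 (L10 Ω η) (fun R β => Ω R β * wphi δ R β)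
        + inner2 (L20 η) (fun R β => η R β * wphi δ R β)
      ≤ (-(1/4) + 3*|1-δ|) *
        ((norm2 (fun R β => Ω R β * Real.sqrt (wphi δ R β)))^2
          + (norm2 (fun R β => η R β * Real.sqrt (wphi δ R β)))^2) ∧
    inner2 (L30 ξ) (fun R β => ξ R β * wpsi δ₁ δ₂ R β)
      ≤ (-(1/2) + 3 * max |1-δ₁| |1-δ₂|) *
        (norm2 (fun R β => ξ R β * Real.sqrt (wpsi δ₁ δ₂ R β)))^2 := by
  obtain ⟨hφ, hψ⟩ := damping_local_operators_general δ δ₁ δ₂ Ω η ξ hΩ hη hξ hΩs hηs hξs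
  exact ⟨hφ, hψ.trans (by gcongr; norm_num)⟩

end Paper
end
end
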